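/- Let p_1,…,p_m ∈ ℕ with each p_i ≥ 2 and Σ_{i=1}^m 1/p_i < m−1, and let K be a nontrivial conjugacy class of Γ_{p_1,…,p_m} contained in L_{p_1,…,p_m}. Then ℙ[Z_K(H_n) = n] → 1 as n → ∞. -/

import Mathlib

open Filter Topology Asymptotics
open scoped TensorProduct

/-- the relations `x_i ^ p_i = x_j ^ p_j` defining `Γ_{p_1,…,p_m}` -/
def torusRels (m : ℕ) (p : Fin m → ℕ) : Set (FreeGroup (Fin m)) :=
  {w : FreeGroup (Fin m) | ∃ i j : Fin m, w = FreeGroup.of i ^ p i * (FreeGroup.of j ^ p j)⁻¹}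

/-- the group `Γ_{p_1,…,p_m} = ⟨x_1,…,x_m ∣ x_1^{p_1} = ⋯ = x_m^{p_m}⟩` -/
abbrev TorusKnotGroup (m : ℕ) (p : Fin m → ℕ) : Type :=
  PresentedGroup (torusRels m p)

/-- the relations `x_i ^ p_i = 1` defining `C_{p_1} * ⋯ * C_{p_m}` -/
def cyclicRels (m : ℕ) (p : Fin m → ℕ) : Set (FreeGroup (Fin m)) :=
  {w : FreeGroup (Fin m) | ∃ i : Fin m, w = FreeGroup.of i ^ p i}

/-- the free product `C_{p_1} * ⋯ * C_{p_m}` of cyclic groups of orders `p_1, …, p_m`,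
presented as `⟨x_1,…,x_m ∣ x_1^{p_1} = ⋯ = x_m^{p_m} = 1⟩`. -/
abbrev CyclicFreeProduct (m : ℕ) (p : Fin m → ℕ) : Type :=
  PresentedGroup (cyclicRels m p)

theorem cyclicFreeProduct_gen_pow (m : ℕ) (p : Fin m → ℕ) (i : Fin m) :
    (PresentedGroup.of (rels := cyclicRels m p) i) ^ p i = 1 := by
  have : PresentedGroup.mk (cyclicRels m p) (FreeGroup.of i ^ p i) = 1 := by
    apply (QuotientGroup.eq_one_iff _).mpr
    exact Subgroup.subset_normalClosure ⟨i, rfl⟩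
  exact (map_pow _ _ _).symm.trans this

/-- the projection `Φ_{p_1,…,p_m} : Γ_{p_1,…,p_m} → C_{p_1} * ⋯ * C_{p_m}`,
sending each generator `x_j` to the fixed generator of `C_{p_j}`;
its kernel is `L_{p_1,…,p_m}`. -/
noncomputable def PhiMap (m : ℕ) (p : Fin m → ℕ) :
    TorusKnotGroup m p →* CyclicFreeProduct m p :=
  PresentedGroup.toGroup (f := fun i => PresentedGroup.of i) (by
    rintro w ⟨i, j, rfl⟩
    simp only [map_mul, map_pow, map_inv, FreeGroup.lift_apply_of]
    rw [cyclicFreeProduct_gen_pow, cyclicFreeProduct_gen_pow]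
    simp)

/-- `Z_g(H)`: the number of fixed points of `g` acting on the coset space `G ⧸ H`.
For any `g` in a conjugacy class `K`, this equals `Z_K(H)`. -/
noncomputable def fixedCosetCount {G : Type*} [Group G] (g : G) (H : Subgroup G) : ℕ :=
  Nat.card {x : G ⧸ H // g • x = x}

/-- the probability that a uniformly random index `n` subgroup of `G` satisfies `P` -/
noncomputable def subgroupProb (G : Type*) [Group G] (n : ℕ) (P : Subgroup G → Prop) : ℝ :=
  (Nat.card {H : Subgroup G // H.index = n ∧ P H} : ℝ) /
    (Nat.card {H : Subgroup G // H.index = n} : ℝ)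

/-!
By the relations, `z = x_1 ^ p_1` is central, and it generates a subgroup that contains `L = ker Φ`.
If `H` contains `L`, then `g ∈ L` fixes all cosets of `H`, as `L` is normal; such `H` of index `n`
correspond to the index `n` subgroups of `F = C_{p_1} * ⋯ * C_{p_m}`. If `H` does not contain `L`,
then the index of `L ⊔ H` is a proper divisor `e ≤ n / 2` of `n`, and since `L` is cyclic and
central, at most `2 ^ O(n)` subgroups `H` have the same join with `L`. It therefore suffices that
`s_n(F) = exp (δ n log n + O(n))` with `δ = m - 1 - ∑ 1 / p_i > 0`: then `∑ s_e(F)` over the proper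
divisors `e` of `n` is `exp (δ / 2 * n log n + O(n))` and is negligible.

The upper bound on `s_n(F)` comes from counting all homomorphisms `F → S_n`, as the number of
solutions of `τ ^ p = 1` in `S_n` is `exp ((1 - 1 / p) n log n + O(n))`. For the lower bound only
transitive actions count. Fix a transitive action of two of the factors, `C_p * C_q`, on `n` points
in which the generator of `C_p` fixes as many points as possible, up to `O(1)`. Then let that
generator act on its fixed points, and the generators of the remaining factors everywhere, by
arbitrary permutations of the right exponent: the action stays transitive, and distinct choices give
distinct stabilizers of the base point.
-/

/-! ### Subgroup counting -/

section SubgroupCounting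

/-- The number `s_n(G)` of index `n` subgroups of `G` (`0` if there are infinitely many). -/
noncomputable def numSubgroups (G : Type*) [Group G] (n : ℕ) : ℕ :=
  Nat.card {H : Subgroup G // H.index = n}

/-- The permutation representation of `G` on `G ⧸ H`, transported to `X` along the labelling `ε` of
the cosets. -/
def cosetHom {G X : Type*} [Group G] (H : Subgroup G) (ε : G ⧸ H ≃ X) : G →* Equiv.Perm X :=
  ε.permCongrHom.toMonoidHom.comp (MulAction.toPermHom G (G ⧸ H))

variable {G F X A : Type*} [Group G] [Group F] [Group A]

theorem cosetHom_apply_one (H : Subgroup G) (ε : G ⧸ H ≃ X) (g : G) :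
    cosetHom H ε g (ε (1 : G)) = ε g := by
  simp [cosetHom, Equiv.permCongr_apply]

theorem cosetHom_injective :
    Function.Injective fun a : (Σ H : Subgroup G, G ⧸ H ≃ X) ↦
      (cosetHom a.1 a.2, a.2 (1 : G)) := by
  rintro ⟨H, ε⟩ ⟨H', ε'⟩ h
  obtain ⟨hhom, hone⟩ : cosetHom H ε = cosetHom H' ε' ∧ ε (1 : G) = ε' (1 : G) :=
    Prod.mk.inj h
  have hcoe (g : G) : ε g = ε' g := by
    rw [← cosetHom_apply_one, hhom, hone, cosetHom_apply_one]
  have hmem (K : Subgroup G) (η : G ⧸ K ≃ X) (g : G) : g ∈ K ↔ η g = η (1 : G) := by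
    rw [η.apply_eq_iff_eq, eq_comm, QuotientGroup.eq, inv_one, one_mul]
  obtain rfl : H = H' := by
    ext g
    rw [hmem H ε, hmem H' ε', hcoe, hone]
  congr
  ext ⟨g⟩
  exact hcoe g

theorem restrict_generators_injective {S : Set G} (hS : Subgroup.closure S = ⊤) :
    Function.Injective fun (φ : G →* A) (s : S) ↦ φ s :=
  fun _ _ h ↦ MonoidHom.eq_of_eqOn_dense hS fun s hs ↦ congrFun h ⟨s, hs⟩

instance finite_monoidHom_of_fg [Group.FG G] [Finite A] : Finite (G →* A) :=
  have ⟨_, hS⟩ := Group.fg_iff.mp ‹Group.FG G›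
  have := hS.2.to_subtype
  .of_injective _ (restrict_generators_injective hS.1)

variable (G) in
theorem card_monoidHom_le [Group.FG G] [Finite A] :
    Nat.card (G →* A) ≤ Nat.card A ^ Group.rank G := by
  obtain ⟨S, hcard, hS⟩ := Group.rank_spec G
  calc Nat.card (G →* A) ≤ Nat.card (S → A) :=
        Nat.card_le_card_of_injective _ (restrict_generators_injective hS)
    _ = Nat.card A ^ Group.rank G := by
        rw [Nat.card_fun, Nat.card_eq_fintype_card (α := S), Fintype.card_coe, hcard]

theorem nonempty_quotient_equiv_fin {H : Subgroup G} {n : ℕ} (hn : n ≠ 0) (h : H.index = n) :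
    Nonempty (G ⧸ H ≃ Fin n) :=
  have : Finite (G ⧸ H) := Nat.finite_of_card_ne_zero (h.trans_ne hn)
  ⟨Finite.equivFinOfCardEq h⟩

theorem finite_index_eq_and [Group.FG G] {n : ℕ} (hn : n ≠ 0) (P : Subgroup G → Prop) :
    Finite {H : Subgroup G // H.index = n ∧ P H} := by
  have := Finite.of_injective _ (cosetHom_injective (G := G) (X := Fin n))
  refine .of_injective (fun H ↦ (⟨H, (nonempty_quotient_equiv_fin hn H.2.1).some⟩ :
    Σ H : Subgroup G, G ⧸ H ≃ Fin n)) fun H K h ↦ ?_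
  exact Subtype.ext (congrArg Sigma.fst h)

theorem finite_index_eq [Group.FG G] {n : ℕ} (hn : n ≠ 0) :
    Finite {H : Subgroup G // H.index = n} := by
  simpa using finite_index_eq_and hn fun _ : Subgroup G ↦ True

variable (G) in
theorem numSubgroups_mul_factorial_le [Group.FG G] {n : ℕ} (hn : n ≠ 0) :
    numSubgroups G n * n.factorial ≤ Nat.card (G →* Equiv.Perm (Fin n)) * n := by
  have := finite_index_eq (G := G) hn
  have := Fintype.ofFinite {H : Subgroup G // H.index = n}
  have hfibre (H : {H : Subgroup G // H.index = n}) : Nat.card (G ⧸ H.1 ≃ Fin n) = n.factorial := by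
    obtain ⟨ε⟩ := nonempty_quotient_equiv_fin hn H.2
    rw [Nat.card_congr (ε.equivCongr (.refl _)), Nat.card_perm, Nat.card_fin]
  calc numSubgroups G n * n.factorial
      = Nat.card (Σ H : {H : Subgroup G // H.index = n}, G ⧸ H.1 ≃ Fin n) := by
        simp only [Nat.card_sigma, hfibre, Finset.sum_const, Finset.card_univ, smul_eq_mul,
          numSubgroups, Nat.card_eq_fintype_card]
    _ ≤ Nat.card ((G →* Equiv.Perm (Fin n)) × Fin n) :=
        Nat.card_le_card_of_injective _
          (cosetHom_injective.comp (Subtype.val_injective.sigma_map fun _ ↦ Function.injective_id))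
    _ = Nat.card (G →* Equiv.Perm (Fin n)) * n := by rw [Nat.card_prod, Nat.card_fin]

/-! ### Subgroups not containing a central cyclic subgroup -/

theorem card_index_eq_ker_le {φ : G →* F} (hφ : Function.Surjective φ) (n : ℕ) :
    Nat.card {H : Subgroup G // H.index = n ∧ φ.ker ≤ H} = numSubgroups F n :=
  Nat.card_congr
    { toFun H := ⟨H.1.map φ, by
        rw [← Subgroup.index_comap_of_surjective _ hφ, Subgroup.comap_map_eq_self H.2.2, H.2.1]⟩
      invFun K := ⟨K.1.comap φ, by
        rw [Subgroup.index_comap_of_surjective _ hφ, K.2], φ.ker_le_comap _⟩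
      left_inv H := Subtype.ext (Subgroup.comap_map_eq_self H.2.2)
      right_inv K := Subtype.ext (Subgroup.map_comap_eq_self_of_surjective hφ _) }

theorem card_le_mul_card_of_fibre_le {α β : Type*} [Finite α] [Finite β] {N : ℕ} (f : α → β)
    (hf : ∀ b, Nat.card {a // f a = b} ≤ N) : Nat.card α ≤ N * Nat.card β := by
  have := Fintype.ofFinite β
  calc Nat.card α = ∑ b, Nat.card {a // f a = b} := by
        rw [← Nat.card_sigma, Nat.card_congr (Equiv.sigmaFiberEquiv f)]
    _ ≤ ∑ _b : β, N := Finset.sum_le_sum fun b _ ↦ hf b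
    _ = N * Nat.card β := by
        rw [Finset.sum_const, Finset.card_univ, smul_eq_mul, mul_comm, Nat.card_eq_fintype_card]

theorem exists_hom_zmod_ker_eq {L H : Subgroup G} [IsCyclic L]
    (hL : L ≤ Subgroup.normalizer (H : Set G)) :
    ∃ χ : (L ⊔ H : Subgroup G) →* Multiplicative (ZMod (H.relIndex (L ⊔ H))),
      χ.ker = H.subgroupOf (L ⊔ H) := by
  have := Subgroup.normal_subgroupOf_of_le_normalizer hL
  have := Subgroup.normal_subgroupOf_sup_of_le_normalizer hL
  have : IsCyclic (L ⧸ H.subgroupOf L) :=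
    isCyclic_of_surjective _ (QuotientGroup.mk'_surjective _)
  have : IsCyclic ((L ⊔ H : Subgroup G) ⧸ H.subgroupOf (L ⊔ H)) :=
    (QuotientGroup.quotientInfEquivProdNormalizerQuotient L H hL).isCyclic.mp ‹_›
  let e : (L ⊔ H : Subgroup G) ⧸ H.subgroupOf (L ⊔ H) ≃*
      Multiplicative (ZMod (H.relIndex (L ⊔ H))) :=
    mulEquivOfCyclicCardEq (by rw [Nat.card_congr Multiplicative.toAdd, Nat.card_zmod]; rfl)
  refine ⟨e.toMonoidHom.comp (QuotientGroup.mk' _), ?_⟩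
  exact (MonoidHom.ker_mulEquiv_comp (QuotientGroup.mk' _) e).trans (QuotientGroup.ker_mk' _)

theorem card_index_eq_mul_sup_eq_le [Group.FG G] {L K : Subgroup G} [IsCyclic L] [K.FiniteIndex]
    (hL : L ≤ Subgroup.center G) {d : ℕ} (hd : d ≠ 0) :
    Nat.card {H : Subgroup G // H.index = d * K.index ∧ L ⊔ H = K} ≤
      d ^ (K.index * Group.rank G) := by
  have : NeZero d := ⟨hd⟩
  have hle (H : {H : Subgroup G // H.index = d * K.index ∧ L ⊔ H = K}) : H.1 ≤ K :=
    le_sup_right.trans_eq H.2.2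
  have hχ (H : {H : Subgroup G // H.index = d * K.index ∧ L ⊔ H = K}) :
      ∃ χ : K →* Multiplicative (ZMod d), χ.ker = H.1.subgroupOf K := by
    obtain ⟨H, hindex, rfl⟩ := H
    obtain rfl : H.relIndex (L ⊔ H) = d := mul_right_cancel₀ Subgroup.FiniteIndex.index_ne_zero
      ((Subgroup.relIndex_mul_index le_sup_right).trans hindex)
    exact exists_hom_zmod_ker_eq (hL.trans (Subgroup.center_le_normalizer _))
  choose χ hker using hχ
  have hinj : Function.Injective χ := fun H H' h ↦ by
    have hinf : H.1 ⊓ K = H'.1 ⊓ K :=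
      Subgroup.subgroupOf_inj.mp (by rw [← hker H, ← hker H', h])
    rw [inf_eq_left.mpr (hle H), inf_eq_left.mpr (hle H')] at hinf
    exact Subtype.ext hinf
  have hZ : Nat.card (Multiplicative (ZMod d)) = d := by
    rw [Nat.card_congr Multiplicative.toAdd, Nat.card_zmod]
  calc _ ≤ Nat.card (K →* Multiplicative (ZMod d)) := Nat.card_le_card_of_injective χ hinj
    _ ≤ d ^ Group.rank K := (card_monoidHom_le K).trans_eq (by rw [hZ])
    _ ≤ d ^ (K.index * Group.rank G) :=
        Nat.pow_le_pow_right hd.bot_lt K.rank_le_index_mul_rank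

theorem card_index_eq_sup_eq_le [Group.FG G] {L : Subgroup G} [IsCyclic L]
    (hL : L ≤ Subgroup.center G) {n : ℕ} (hn : n ≠ 0) (K : Subgroup G) :
    Nat.card {H : Subgroup G // H.index = n ∧ L ⊔ H = K} ≤ 2 ^ (n * Group.rank G) := by
  obtain hempty | ⟨⟨H₀, hH₀, hK⟩⟩ :=
    isEmpty_or_nonempty {H : Subgroup G // H.index = n ∧ L ⊔ H = K}
  · simp only [Nat.card_of_isEmpty, zero_le]
  obtain ⟨d, rfl⟩ : ∃ d, n = d * K.index :=
    ⟨_, hH₀.symm.trans (Subgroup.relIndex_mul_index (le_sup_right.trans_eq hK)).symm⟩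
  have : K.FiniteIndex := ⟨right_ne_zero_of_mul hn⟩
  calc Nat.card {H : Subgroup G // H.index = d * K.index ∧ L ⊔ H = K}
      ≤ d ^ (K.index * Group.rank G) := card_index_eq_mul_sup_eq_le hL (left_ne_zero_of_mul hn)
    _ ≤ (2 ^ d) ^ (K.index * Group.rank G) := Nat.pow_le_pow_left d.lt_two_pow_self.le _
    _ = 2 ^ (d * K.index * Group.rank G) := by rw [← pow_mul, mul_assoc]

theorem sup_index_mem_properDivisors {L H : Subgroup G} (hH : H.index ≠ 0) (hLH : ¬ L ≤ H) :
    (L ⊔ H).index ∈ H.index.properDivisors := by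
  have hdvd : (L ⊔ H).index ∣ H.index := Subgroup.index_dvd_of_le le_sup_right
  refine Nat.mem_properDivisors.mpr
    ⟨hdvd, (Nat.le_of_dvd hH.bot_lt hdvd).lt_of_ne fun heq ↦ hLH ?_⟩
  have hmul := Subgroup.relIndex_mul_index (le_sup_right : H ≤ L ⊔ H)
  rw [heq, Nat.mul_eq_right hH] at hmul
  exact le_sup_left.trans (Subgroup.relIndex_eq_one.mp hmul)

theorem card_index_eq_not_le_le [Group.FG G] {L : Subgroup G} [IsCyclic L]
    (hL : L ≤ Subgroup.center G) {n : ℕ} (hn : n ≠ 0) :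
    Nat.card {H : Subgroup G // H.index = n ∧ ¬ L ≤ H} ≤
      2 ^ (n * Group.rank G) *
        ∑ e ∈ n.properDivisors, Nat.card {K : Subgroup G // K.index = e ∧ L ≤ K} := by
  have := finite_index_eq_and hn (¬ L ≤ ·)
  have (e : n.properDivisors) : Finite {K : Subgroup G // K.index = e ∧ L ≤ K} :=
    finite_index_eq_and (Nat.pos_of_mem_properDivisors e.2).ne' (L ≤ ·)
  let sup (H : {H : Subgroup G // H.index = n ∧ ¬ L ≤ H}) :
      Σ e : n.properDivisors, {K : Subgroup G // K.index = e ∧ L ≤ K} :=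
    ⟨⟨(L ⊔ H.1).index, by
        simpa only [H.2.1] using sup_index_mem_properDivisors (H.2.1.trans_ne hn) H.2.2⟩,
      L ⊔ H.1, rfl, le_sup_left⟩
  have hfibre (b) : Nat.card {H // sup H = b} ≤ 2 ^ (n * Group.rank G) := by
    have := finite_index_eq_and hn (L ⊔ · = b.2.1)
    let forget (H : {H // sup H = b}) : {H : Subgroup G // H.index = n ∧ L ⊔ H = b.2.1} :=
      ⟨H.1.1, H.1.2.1, congrArg (fun c ↦ c.2.1) H.2⟩
    have hforget : Function.Injective forget := fun H H' h ↦
      Subtype.ext (Subtype.ext (Subtype.mk.inj h))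
    exact (Nat.card_le_card_of_injective forget hforget).trans (card_index_eq_sup_eq_le hL hn _)
  refine (card_le_mul_card_of_fibre_le sup hfibre).trans_eq ?_
  rw [Nat.card_sigma, Finset.sum_coe_sort n.properDivisors
    fun e ↦ Nat.card {K : Subgroup G // K.index = e ∧ L ≤ K}]

/-! ### Random subgroups -/

theorem fixedCosetCount_eq_index {N H : Subgroup G} [N.Normal] (hNH : N ≤ H) {g : G} (hg : g ∈ N) :
    fixedCosetCount g H = H.index := by
  have hfix (x : G ⧸ H) : g • x = x := by
    induction x using QuotientGroup.induction_on with
    | H a =>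
      rw [MulAction.Quotient.smul_coe, eq_comm, QuotientGroup.eq, smul_eq_mul, ← mul_assoc]
      exact hNH (Subgroup.Normal.conj_mem' ‹_› g hg a)
  exact Nat.card_congr (Equiv.subtypeUnivEquiv hfix)

theorem subgroupProb_le_one (n : ℕ) (P : Subgroup G → Prop) :
    subgroupProb G n P ≤ 1 := by
  obtain hfin | hinf := finite_or_infinite {H : Subgroup G // H.index = n}
  · refine div_le_one_of_le₀ (Nat.cast_le.mpr ?_) (Nat.cast_nonneg _)
    exact Finite.card_le_of_embedding (Subtype.impEmbedding _ _ fun _ ↦ And.left)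
  · simp only [subgroupProb, Nat.card_eq_zero_of_infinite, Nat.cast_zero, div_zero, zero_le_one]

theorem subgroupProb_mono [Group.FG G] {n : ℕ} (hn : n ≠ 0) {P Q : Subgroup G → Prop}
    (hPQ : ∀ H, H.index = n → P H → Q H) : subgroupProb G n P ≤ subgroupProb G n Q := by
  have := finite_index_eq_and hn Q
  refine div_le_div_of_nonneg_right (Nat.cast_le.mpr ?_) (Nat.cast_nonneg _)
  exact Finite.card_le_of_embedding (Subtype.impEmbedding _ _ fun H h ↦ ⟨h.1, hPQ H h.1 h.2⟩)

theorem one_sub_le_subgroupProb [Group.FG G] {n : ℕ} (hn : n ≠ 0) {P : Subgroup G → Prop}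
    (hpos : Nat.card {H : Subgroup G // H.index = n ∧ P H} ≠ 0) :
    1 - (Nat.card {H : Subgroup G // H.index = n ∧ ¬ P H} : ℝ) /
        Nat.card {H : Subgroup G // H.index = n ∧ P H} ≤
      subgroupProb G n P := by
  have hfin := finite_index_eq (G := G) hn
  set good := Nat.card {H : Subgroup G // H.index = n ∧ P H} with hgood
  set bad := Nat.card {H : Subgroup G // H.index = n ∧ ¬ P H}
  have htotal : Nat.card {H : Subgroup G // H.index = n} = good + bad :=
    (Set.ncard_inter_add_ncard_sdiff_eq_ncard {H : Subgroup G | H.index = n} {H | P H}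
      (Set.finite_coe_iff.mp hfin)).symm
  have : (0 : ℝ) < good := Nat.cast_pos.mpr hpos.bot_lt
  rw [subgroupProb, htotal, Nat.cast_add, ← hgood, le_div_iff₀ (by positivity)]
  calc (1 - (bad : ℝ) / good) * (good + bad) = good - bad ^ 2 / good := by field
    _ ≤ good := sub_le_self _ (by positivity)

end SubgroupCounting

/-! ### Solutions of `τ ^ p = 1` in symmetric groups -/

section TorsionCount

/-- `M` contains exactly one point of every cycle of `τ`, fixed points counting as cycles. -/
def IsCycleTransversal {X : Type*} (M : Set X) (τ : Equiv.Perm X) : Prop :=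
  ∀ x, ∃! u, u ∈ M ∧ τ.SameCycle u x

/-- The number of permutations of `k` points whose `p`-th power is trivial. -/
noncomputable def torsionCount (p k : ℕ) : ℕ :=
  Nat.card {τ : Equiv.Perm (Fin k) // τ ^ p = 1}

variable {X : Type*} {M : Set X} {σ τ : Equiv.Perm X}

theorem exists_isCycleTransversal (τ : Equiv.Perm X) : ∃ M, IsCycleTransversal M τ := by
  let rep (x : X) : X := Quotient.out (s := Equiv.Perm.SameCycle.setoid τ) ⟦x⟧
  have hrep (x : X) : τ.SameCycle (rep x) x :=
    Quotient.mk_out (s := Equiv.Perm.SameCycle.setoid τ) x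
  refine ⟨Set.range rep, fun x ↦ ⟨rep x, ⟨⟨x, rfl⟩, hrep x⟩, ?_⟩⟩
  rintro _ ⟨⟨y, rfl⟩, hy⟩
  exact congrArg Quotient.out (Quotient.sound ((hrep y).symm.trans hy))

namespace IsCycleTransversal

theorem eq_of_sameCycle (hτ : IsCycleTransversal M τ) {u v : X} (hu : u ∈ M) (hv : v ∈ M)
    (huv : τ.SameCycle u v) : u = v :=
  (hτ v).unique ⟨hu, huv⟩ ⟨hv, .refl τ v⟩

theorem card_le_mul_ncard [Finite X] (hτ : IsCycleTransversal M τ) {p : ℕ} (hp : 0 < p)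
    (hpow : τ ^ p = 1) : Nat.card X ≤ p * M.ncard := by
  have hsurj : Function.Surjective fun a : Fin p × M ↦ (τ ^ (a.1 : ℕ)) a.2 := fun x ↦ by
    obtain ⟨u, ⟨hu, hux⟩, -⟩ := hτ x
    obtain ⟨i, hi, rfl⟩ := hux.exists_pow_eq'
    exact ⟨(⟨i, hi.trans_le (orderOf_le_of_pow_eq_one hp hpow)⟩, ⟨u, hu⟩), rfl⟩
  simpa using Nat.card_le_card_of_surjective _ hsurj

theorem sameCycle_of_eqOn_compl [Finite X] (hσ : IsCycleTransversal M σ) (h : Set.EqOn σ τ Mᶜ)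
    {x v : X} (hv : v ∈ M) (hxv : σ.SameCycle x v) : τ.SameCycle x v := by
  obtain ⟨i, hi⟩ := hxv.exists_nat_pow_eq
  induction i generalizing x with
  | zero => exact (show x = v from hi) ▸ .refl τ x
  | succ i ih =>
    by_cases hx : x ∈ M
    · exact hσ.eq_of_sameCycle hx hv hxv ▸ .refl τ x
    · rw [← Equiv.Perm.sameCycle_apply_left, ← h hx]
      exact ih (Equiv.Perm.sameCycle_apply_left.mpr hxv) (by rw [← hi, pow_succ]; rfl)

theorem eq_of_eqOn_compl [Finite X] (hσ : IsCycleTransversal M σ) (hτ : IsCycleTransversal M τ)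
    (h : Set.EqOn σ τ Mᶜ) : σ = τ := by
  ext x
  by_cases hx : x ∈ M
  · obtain ⟨u, hu⟩ := τ.surjective (σ x)
    have huM : u ∈ M := by
      by_contra huM
      exact huM (σ.injective ((h huM).trans hu) ▸ hx)
    have hux : τ.SameCycle u x := by
      rw [← Equiv.Perm.sameCycle_apply_left, hu]
      exact hσ.sameCycle_of_eqOn_compl h hx (Equiv.Perm.sameCycle_apply_left.mpr (.refl σ x))
    rw [← hu, hτ.eq_of_sameCycle huM hx hux]
  · exact h hx

end IsCycleTransversal

theorem card_pow_eq_one (p : ℕ) [Finite X] :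
    Nat.card {τ : Equiv.Perm X // τ ^ p = 1} = torsionCount p (Nat.card X) := by
  let e := (Finite.equivFin X).permCongrHom
  refine Nat.card_congr (e.toEquiv.subtypeEquiv fun τ ↦ ?_)
  rw [← map_eq_one_iff e e.injective, map_pow]
  rfl

theorem torsionCount_pos (p k : ℕ) : 0 < torsionCount p k :=
  have : Nonempty {τ : Equiv.Perm (Fin k) // τ ^ p = 1} := ⟨1, one_pow p⟩
  Nat.card_pos

theorem torsionCount_zero (p : ℕ) : torsionCount p 0 = 1 :=
  Nat.card_eq_one_iff_unique.mpr ⟨inferInstance, ⟨1, one_pow p⟩⟩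

theorem card_pow_eq_one_isCycleTransversal_le [Finite X] [Nonempty X] {p : ℕ} (hp : 0 < p)
    (M : Set X) :
    Nat.card {τ : Equiv.Perm X // τ ^ p = 1 ∧ IsCycleTransversal M τ} ≤
      Nat.card X ^ ((p - 1) * Nat.card X / p) := by
  obtain hempty | ⟨⟨τ₀, hτ₀, hM⟩⟩ :=
    isEmpty_or_nonempty {τ : Equiv.Perm X // τ ^ p = 1 ∧ IsCycleTransversal M τ}
  · simp only [Nat.card_of_isEmpty, zero_le]
  have hinj : Function.Injective fun (τ : {τ : Equiv.Perm X // τ ^ p = 1 ∧ IsCycleTransversal M τ})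
      (x : (Mᶜ : Set X)) ↦ τ.1 x := fun σ τ h ↦
    Subtype.ext (σ.2.2.eq_of_eqOn_compl τ.2.2 fun x hx ↦ congrFun h ⟨x, hx⟩)
  have hcompl : (Mᶜ).ncard ≤ (p - 1) * Nat.card X / p := by
    rw [Nat.le_div_iff_mul_le hp]
    have hcard := hM.card_le_mul_ncard hp hτ₀
    have hsum := M.ncard_add_ncard_compl
    zify [show 1 ≤ p from hp] at hcard hsum ⊢
    linear_combination hcard + p * hsum
  calc _ ≤ Nat.card ((Mᶜ : Set X) → X) := Nat.card_le_card_of_injective _ hinj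
    _ = Nat.card X ^ (Mᶜ).ncard := Nat.card_fun
    _ ≤ _ := Nat.pow_le_pow_right Nat.card_pos hcompl

theorem torsionCount_le {p : ℕ} (hp : 0 < p) {k : ℕ} (hk : k ≠ 0) :
    torsionCount p k ≤ k ^ ((p - 1) * k / p) * 2 ^ k := by
  have : NeZero k := ⟨hk⟩
  choose M hM using fun τ : {τ : Equiv.Perm (Fin k) // τ ^ p = 1} ↦ exists_isCycleTransversal τ.1
  have hfibre (N : Set (Fin k)) : Nat.card {τ // M τ = N} ≤ k ^ ((p - 1) * k / p) := by
    let forget (τ : {τ // M τ = N}) :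
        {τ : Equiv.Perm (Fin k) // τ ^ p = 1 ∧ IsCycleTransversal N τ} :=
      ⟨τ.1, τ.1.2, by simpa only [τ.2] using hM τ.1⟩
    have hforget : Function.Injective forget := fun σ τ h ↦
      Subtype.ext (Subtype.ext (Subtype.mk.inj h))
    simpa only [Nat.card_fin] using (Nat.card_le_card_of_injective _ hforget).trans
      (card_pow_eq_one_isCycleTransversal_le hp N)
  calc torsionCount p k ≤ k ^ ((p - 1) * k / p) * Nat.card (Set (Fin k)) :=
        card_le_mul_card_of_fibre_le M hfibre
    _ = k ^ ((p - 1) * k / p) * 2 ^ k := by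
        rw [Nat.card_eq_fintype_card, Fintype.card_set, Fintype.card_fin]

theorem factorial_le_torsionCount_mul {p : ℕ} (hp : 2 ≤ p) (k : ℕ) :
    k.factorial ≤ torsionCount p k * (p.factorial * p ^ k * (k / p).factorial) := by
  classical
  set q := k / p
  have hq : q * p ≤ k := Nat.div_mul_le_self k p
  have hrem : k - q * p ≤ p := by
    rw [mul_comm, ← Nat.mod_eq_sub_mul_div]
    exact (Nat.mod_lt k (by lia)).le
  have hcycles : Finset.card {g : Equiv.Perm (Fin k) | g.cycleType = Multiset.replicate q p} ≤
      torsionCount p k := by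
    rw [torsionCount, Nat.card_eq_fintype_card, Fintype.card_subtype]
    refine Finset.card_le_card fun g hg ↦ Finset.mem_filter_univ _ |>.mpr ?_
    rw [← orderOf_dvd_iff_pow_eq_one, ← Equiv.Perm.lcm_cycleType, Multiset.lcm_dvd,
      (Finset.mem_filter_univ _).mp hg]
    exact fun b hb ↦ (Multiset.eq_of_mem_replicate hb).dvd
  have hcount := Equiv.Perm.card_of_cycleType_mul_eq (α := Fin k) (Multiset.replicate q p)
  rw [if_pos ⟨by simpa using hq, fun a ha ↦ by rwa [Multiset.eq_of_mem_replicate ha]⟩] at hcount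
  have hmult : ∏ n ∈ (Multiset.replicate q p).toFinset,
      ((Multiset.replicate q p).count n).factorial ≤ q.factorial := by
    obtain hq0 | hq0 := eq_or_ne q 0
    · simp [hq0]
    · simp [Multiset.toFinset_replicate, hq0]
  simp only [Fintype.card_fin, Multiset.sum_replicate, Multiset.prod_replicate,
    smul_eq_mul] at hcount
  rw [← hcount]
  gcongr
  · lia
  · exact Nat.div_le_self k p

theorem log_torsionCount_le {p : ℕ} (hp : 0 < p) (k : ℕ) :
    Real.log (torsionCount p k) ≤ (1 - 1 / (p : ℝ)) * (k * Real.log k) + Real.log 2 * k := by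
  obtain rfl | hk := eq_or_ne k 0
  · simp [torsionCount_zero]
  have : (1 : ℝ) ≤ k := Nat.one_le_cast.mpr hk.bot_lt
  have hexp : (((p - 1) * k / p : ℕ) : ℝ) ≤ (1 - 1 / (p : ℝ)) * k := by
    refine Nat.cast_div_le.trans_eq ?_
    rw [Nat.cast_mul, Nat.cast_pred hp]
    field
  calc Real.log (torsionCount p k) ≤ Real.log ((k : ℝ) ^ ((p - 1) * k / p) * 2 ^ k) := by
        refine Real.log_le_log (mod_cast torsionCount_pos p k) ?_
        exact_mod_cast torsionCount_le hp hk
    _ = ((p - 1) * k / p : ℕ) * Real.log k + k * Real.log 2 := by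
        rw [Real.log_mul (by positivity) (by positivity), Real.log_pow, Real.log_pow]
    _ ≤ (1 - 1 / (p : ℝ)) * k * Real.log k + k * Real.log 2 := by
        gcongr
    _ = _ := by ring

theorem mul_log_sub_le_log_factorial (k : ℕ) : k * Real.log k - k ≤ Real.log k.factorial := by
  obtain rfl | hk := eq_or_ne k 0
  · simp
  · have hk' : 0 ≤ Real.log k := Real.log_natCast_nonneg k
    have hpi : 0 ≤ Real.log (2 * Real.pi) := Real.log_nonneg (by linarith [Real.pi_gt_three])
    linarith [Stirling.le_log_factorial_stirling hk]

theorem exists_le_log_torsionCount {p : ℕ} (hp : 2 ≤ p) :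
    ∃ C : ℝ, 0 ≤ C ∧ ∀ k : ℕ, (1 - 1 / (p : ℝ)) * (k * Real.log k) - C * k ≤
      Real.log (torsionCount p k) := by
  refine ⟨1 + Real.log p + Real.log p.factorial, by positivity, fun k ↦ ?_⟩
  obtain rfl | hk := eq_or_ne k 0
  · simp [torsionCount_zero]
  have hfact : Real.log k.factorial ≤ Real.log (torsionCount p k) +
      (Real.log p.factorial + k * Real.log p + Real.log (k / p).factorial) := by
    have hT := torsionCount_pos p k
    rw [← Real.log_pow, ← Real.log_mul, ← Real.log_mul, ← Real.log_mul]
    · refine Real.log_le_log (by positivity) ?_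
      exact_mod_cast factorial_le_torsionCount_mul hp k
    all_goals positivity
  have hdiv : Real.log (k / p).factorial ≤ k / p * Real.log k :=
    calc Real.log (k / p).factorial ≤ Real.log ((k : ℝ) ^ (k / p)) := by
          refine Real.log_le_log (by positivity) (mod_cast ?_)
          exact (Nat.factorial_le_pow _).trans (Nat.pow_le_pow_left (Nat.div_le_self k p) _)
      _ ≤ k / p * Real.log k := by
          rw [Real.log_pow]
          gcongr
          exact Nat.cast_div_le
  have hp' : Real.log p.factorial ≤ Real.log p.factorial * k :=
    le_mul_of_one_le_right (Real.log_natCast_nonneg _) (Nat.one_le_cast.mpr hk.bot_lt)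
  linear_combination hfact + mul_log_sub_le_log_factorial k + hdiv + hp'

end TorsionCount

/-! ### Transitive actions of `C_p * C_q` with many fixed points -/

section FillFixed

variable {X : Type*}

open Classical in
/-- The permutation `s`, changed on its fixed points so as to act there as `t`. -/
noncomputable def fillFixed (s : Equiv.Perm X) (t : Equiv.Perm {v // s v = v}) : Equiv.Perm X :=
  s * Equiv.Perm.ofSubtype t

theorem fillFixed_apply_of_ne {s : Equiv.Perm X} (t : Equiv.Perm {v // s v = v}) {v : X}
    (hv : s v ≠ v) : fillFixed s t v = s v := by
  classical
  exact congrArg s (Equiv.Perm.ofSubtype_apply_of_not_mem t hv)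

theorem fillFixed_injective (s : Equiv.Perm X) : Function.Injective (fillFixed s) := by
  classical
  exact (mul_right_injective s).comp Equiv.Perm.ofSubtype_injective

theorem fillFixed_pow_eq_one {s : Equiv.Perm X} {t : Equiv.Perm {v // s v = v}} {p : ℕ}
    (hs : s ^ p = 1) (ht : t ^ p = 1) : fillFixed s t ^ p = 1 := by
  classical
  have hdisj : Equiv.Perm.Disjoint s (Equiv.Perm.ofSubtype t) := fun v ↦ by
    by_cases hv : s v = v
    · exact .inl hv
    · exact .inr (Equiv.Perm.ofSubtype_apply_of_not_mem t hv)
  rw [fillFixed, hdisj.commute.mul_pow, hs, ← map_pow, ht, map_one, one_mul]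

end FillFixed

section Backbone

/-- A transitive action of `C_p * C_q` on `X`, given by the permutations `π` and `ρ` that the
generators induce and a base point `b`. On finite `X` transitivity amounts to the absence of proper
subsets that contain `b` and are mapped into themselves by `π` and `ρ`. -/
structure IsBackbone {X : Type*} (p q : ℕ) (π ρ : Equiv.Perm X) (b : X) : Prop where
  pow_left : π ^ p = 1
  pow_right : ρ ^ q = 1
  eq_univ : ∀ S : Set X, b ∈ S → Set.MapsTo π S S → Set.MapsTo ρ S S → S = Set.univ

/-- There is a transitive action of `C_p * C_q` on `n` points whose first generator fixes at least
`f` of them. -/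
def HasBackbone (p q n f : ℕ) : Prop :=
  ∃ (X : Type) (_ : Finite X) (π ρ : Equiv.Perm X) (b : X),
    IsBackbone p q π ρ b ∧ Nat.card X = n ∧ f ≤ Nat.card {x // π x = x}

variable {p q n f : ℕ}

theorem exists_fuse_fixed {Z : Type*} [Finite Z] {σ : Equiv.Perm Z} (hσ : σ ^ p = 1) {s : Finset Z}
    (hs : ∀ v ∈ s, σ v = v) (hcard : s.card = p) :
    ∃ σ' : Equiv.Perm Z, σ' ^ p = 1 ∧ (∀ v ∉ s, σ' v = σ v) ∧
      ∀ S : Set Z, Set.MapsTo σ' S S → (∃ v ∈ s, v ∈ S) → ↑s ⊆ S := by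
  classical
  have := Fintype.ofFinite Z
  obtain ⟨c, hc, hsupp⟩ := s.exists_cycleOn
  have hfix {v : Z} (hv : v ∉ s) : c v = v := Equiv.Perm.notMem_support.mp fun h ↦ hv (hsupp h)
  have hdisj : Equiv.Perm.Disjoint σ c := fun v ↦ (em (v ∈ s)).imp (hs v) hfix
  have hc_pow : c ^ p = 1 := by
    ext v
    by_cases hv : v ∈ s
    · exact hcard ▸ hc.pow_card_apply hv
    · exact Equiv.Perm.pow_apply_eq_self_of_apply_eq_self (hfix hv) p
  refine ⟨σ * c, by rw [hdisj.commute.mul_pow, hσ, hc_pow, one_mul],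
    fun v hv ↦ congrArg σ (hfix hv), ?_⟩
  rintro S hS ⟨u, hus, huS⟩ v hv
  have hmem (k : ℕ) : (c ^ k) u ∈ s ∧ (c ^ k) u ∈ S := by
    induction k with
    | zero => exact ⟨hus, huS⟩
    | succ k ih =>
      have hstep : c ((c ^ k) u) ∈ s := hc.1.mapsTo ih.1
      rw [pow_succ', Equiv.Perm.mul_apply]
      exact ⟨hstep, hs _ hstep ▸ hS ih.2⟩
  obtain ⟨k, -, rfl⟩ := hc.exists_pow_eq hus hv
  exact (hmem k).2

theorem sumCongr_pow_eq_one {X Y : Type*} {σ : Equiv.Perm X} {τ : Equiv.Perm Y} {k : ℕ}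
    (hσ : σ ^ k = 1) (hτ : τ ^ k = 1) : Equiv.Perm.sumCongr σ τ ^ k = 1 := by
  change Equiv.Perm.sumCongrHom X Y (σ, τ) ^ k = 1
  rw [← map_pow, Prod.pow_mk, hσ, hτ, ← Prod.one_eq_mk, map_one]

/-- Fusing the fixed points in `A` with the points of `B` into one cycle of `π` attaches `Y` to the
backbone. -/
theorem IsBackbone.exists_glue {X Y : Type*} [Finite X] [Finite Y] {π ρ : Equiv.Perm X} {b : X}
    (h : IsBackbone p q π ρ b) {ρY : Equiv.Perm Y} (hρY : ρY ^ q = 1) {A : Finset X} {B : Finset Y}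
    (hA : ∀ x ∈ A, π x = x) (hA' : A.Nonempty) (hcard : A.card + B.card = p)
    (hB : ∀ S : Set Y, ↑B ⊆ S → Set.MapsTo ρY S S → S = Set.univ) :
    ∃ σ : Equiv.Perm (X ⊕ Y), IsBackbone p q σ (Equiv.Perm.sumCongr ρ ρY) (.inl b) ∧
      ∀ v ∉ A.disjSum B, σ v = Equiv.Perm.sumCongr π 1 v := by
  obtain ⟨σ, hσ, hσ_eq, hσ_fuse⟩ := exists_fuse_fixed (s := A.disjSum B)
    (sumCongr_pow_eq_one (τ := (1 : Equiv.Perm Y)) h.pow_left (one_pow p))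
    (by rintro (x | y) hv
        · exact congrArg Sum.inl (hA x (Finset.inl_mem_disjSum.mp hv))
        · rfl)
    (by rw [Finset.card_disjSum, hcard])
  refine ⟨σ, ⟨hσ, sumCongr_pow_eq_one h.pow_right hρY, fun S hb hSσ hSρ ↦ ?_⟩, hσ_eq⟩
  have hX : Sum.inl ⁻¹' S = (Set.univ : Set X) := by
    refine h.eq_univ _ hb (fun v hv ↦ ?_) fun v hv ↦ hSρ hv
    by_cases hvA : v ∈ A
    · rwa [hA v hvA]
    · have := hSσ hv
      rwa [hσ_eq _ (by simpa using hvA)] at this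
  obtain ⟨a, ha⟩ := hA'
  have hfuse : ↑(A.disjSum B) ⊆ S :=
    hσ_fuse S hSσ ⟨.inl a, Finset.inl_mem_disjSum.mpr ha, hX.ge (Set.mem_univ a)⟩
  have hY : Sum.inr ⁻¹' S = (Set.univ : Set Y) :=
    hB _ (fun y hy ↦ hfuse (Finset.inr_mem_disjSum.mpr hy)) fun y hy ↦ hSρ hy
  refine Set.eq_univ_of_forall ?_
  rintro (x | y)
  exacts [hX.ge (Set.mem_univ x), hY.ge (Set.mem_univ y)]

theorem HasBackbone.glue {Y : Type} [Finite Y] (h : HasBackbone p q n f) {ρY : Equiv.Perm Y}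
    (hρY : ρY ^ q = 1) {B : Finset Y} (hBp : B.card < p) (hBf : p ≤ f + B.card)
    (hB : ∀ S : Set Y, ↑B ⊆ S → Set.MapsTo ρY S S → S = Set.univ) :
    HasBackbone p q (n + Nat.card Y) (f + Nat.card Y - p) := by
  obtain ⟨X, hX, π, ρ, b, hb, rfl, hf⟩ := h
  have hfix : p - B.card ≤ {x | π x = x}.ncard := by
    rw [← Nat.card_coe_set_eq]
    exact (show p - B.card ≤ f by lia).trans hf
  obtain ⟨A, hA, hAcard⟩ := Set.exists_subset_card_eq hfix
  lift A to Finset X using A.toFinite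
  rw [Set.ncard_coe_finset] at hAcard
  obtain ⟨σ, hσ, hσ_eq⟩ := hb.exists_glue hρY hA (Finset.card_pos.mp (by lia)) (by lia) hB
  refine ⟨X ⊕ Y, inferInstance, σ, _, _, hσ, Nat.card_sum, ?_⟩
  have hcard : {v | Equiv.Perm.sumCongr π (1 : Equiv.Perm Y) v = v}.ncard =
      Nat.card {x // π x = x} + Nat.card Y := by
    rw [← Nat.card_coe_set_eq, ← Nat.card_sum]
    exact Nat.card_congr (Equiv.subtypeSum.trans (.sumCongr (.subtypeEquivRight (by simp))
      (.subtypeUnivEquiv (by simp))))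
  calc f + Nat.card Y - p
      ≤ {v | Equiv.Perm.sumCongr π (1 : Equiv.Perm Y) v = v}.ncard -
        (↑(A.disjSum B) : Set (X ⊕ Y)).ncard := by
        rw [Set.ncard_coe_finset, Finset.card_disjSum, hcard]
        lia
    _ ≤ ({v | Equiv.Perm.sumCongr π (1 : Equiv.Perm Y) v = v} \ ↑(A.disjSum B)).ncard :=
        Set.le_ncard_sdiff _ _
    _ ≤ {v | σ v = v}.ncard := Set.ncard_le_ncard fun v hv ↦ (hσ_eq v hv.2).trans hv.1

theorem HasBackbone.attach {a r : ℕ} (h : HasBackbone p q n f) (hap : a < p) (haf : p ≤ f + a)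
    (hr : r ≠ 0) (hrq : r ∣ q) : HasBackbone p q (n + a * r) (f + a * r - p) := by
  have : NeZero r := ⟨hr⟩
  obtain ⟨c, hc, -⟩ := (Finset.univ : Finset (Fin r)).exists_cycleOn
  have hc_pow : c ^ r = 1 := by
    ext1 j
    have := hc.pow_card_apply (Finset.mem_univ j)
    rwa [Finset.card_fin] at this
  have hiter (k : ℕ) (i : Fin a) (j : Fin r) :
      (Equiv.prodCongr (Equiv.refl _) c)^[k] (i, j) = (i, (c ^ k) j) := by
    change (Prod.map id c)^[k] (i, j) = _
    rw [Prod.map_iterate, Function.iterate_id, Equiv.Perm.iterate_eq_pow]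
    rfl
  have hglue := h.glue (Y := Fin a × Fin r) (B := Finset.univ ×ˢ {0})
    (ρY := Equiv.prodCongr (Equiv.refl _) c) ?_ (by simpa) (by simpa) fun S hS hmaps ↦ ?_
  · simpa using hglue
  · ext1 ⟨i, j⟩
    obtain ⟨k, rfl⟩ := hrq
    rw [← Equiv.Perm.iterate_eq_pow, hiter, pow_mul, hc_pow, one_pow]
    rfl
  · refine Set.eq_univ_of_forall fun ⟨i, j⟩ ↦ ?_
    obtain ⟨k, -, rfl⟩ := hc.exists_pow_eq (Finset.mem_univ 0) (Finset.mem_univ j)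
    exact hiter k i 0 ▸ hmaps.iterate k (hS (by simp))

theorem hasBackbone_one (p q : ℕ) : HasBackbone p q 1 1 :=
  ⟨Unit, inferInstance, 1, 1, (), ⟨one_pow p, one_pow q, fun _ hS _ _ ↦
    Set.eq_univ_of_forall fun _ ↦ hS⟩, by simp, by simp⟩

theorem le_pred_mul (hp : 2 ≤ p) (hq : 2 ≤ q) : p ≤ (p - 1) * q :=
  calc p ≤ (p - 1) * 2 := by lia
    _ ≤ (p - 1) * q := by gcongr

theorem hasBackbone_add_mul (hp : 2 ≤ p) (hq : 2 ≤ q) (t : ℕ) :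
    HasBackbone p q (1 + t * ((p - 1) * q)) (1 + t * ((p - 1) * q - p)) := by
  induction t with
  | zero => simpa using hasBackbone_one p q
  | succ t ih =>
    have hle := le_pred_mul hp hq
    convert! ih.attach (a := p - 1) (by lia) (by lia) (by lia) (dvd_refl q) using 1 <;>
      rw [Nat.succ_mul] <;> lia

theorem HasBackbone.add (h : HasBackbone p q n f) (hp : 2 ≤ p) {r : ℕ} (hr : r * (p - 1) ≤ f) :
    HasBackbone p q (n + r) (f - r * (p - 1)) := by
  induction r with
  | zero => simpa using h
  | succ r ih =>
    rw [Nat.succ_mul] at hr ⊢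
    convert! (ih (by lia)).attach (a := 1) (by lia) (by lia) one_ne_zero (one_dvd q) using 1
    lia

theorem exists_eq_one_add_mul_add (hp : 2 ≤ p) (hq : 2 ≤ q) {M : ℕ} (hM : M = (p - 1) * q)
    (hn : 1 + M * M * p ≤ n) :
    ∃ t r, n = 1 + t * M + r ∧ r < M ∧ r * (p - 1) ≤ 1 + t * (M - p) := by
  have hpM : p ≤ M := hM ▸ le_pred_mul hp hq
  have hr : (n - 1) % M < M := Nat.mod_lt _ (by lia)
  refine ⟨(n - 1) / M, (n - 1) % M, ?_, hr, ?_⟩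
  · have := Nat.div_add_mod' (n - 1) M
    lia
  obtain hlt | heq := hpM.lt_or_eq
  · have ht : M * p ≤ (n - 1) / M := by
      rw [Nat.le_div_iff_mul_le (by lia)]
      lia
    calc (n - 1) % M * (p - 1) ≤ M * p := by gcongr; lia
      _ ≤ (n - 1) / M * (M - p) := ht.trans (Nat.le_mul_of_pos_right _ (by lia))
      _ ≤ 1 + (n - 1) / M * (M - p) := Nat.le_add_left _ 1
  · have hp2 : p = 2 := by nlinarith [Nat.sub_add_cancel (show 1 ≤ p by lia)]
    subst hp2
    lia

theorem density_mul_le {p q M t r : ℝ} (hp : 1 ≤ p) (hq : 0 < q) (hM : M = (p - 1) * q)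
    (hr : 0 ≤ r) (hrM : 1 + r ≤ M) :
    (1 - 1 / p - 1 / q) * (1 + t * M + r) ≤
      (1 - 1 / p) * (1 + t * (M - p) - r * (p - 1)) + M * p := by
  have hp0 : 0 < p := by linarith
  have hM' : (1 - 1 / p - 1 / q) * M = (1 - 1 / p) * (M - p) := by
    rw [hM]
    field
  have hinv : 1 / p ≤ 1 := (div_le_one hp0).mpr hp
  have hlhs : (1 - 1 / p - 1 / q) * (1 + r) ≤ 1 + r := by
    refine mul_le_of_le_one_left (by positivity) ?_
    have : 0 ≤ 1 / p + 1 / q := by positivity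
    linarith
  have hrhs : (1 - 1 / p) * (r * (p - 1)) ≤ r * (p - 1) :=
    mul_le_of_le_one_left (mul_nonneg hr (sub_nonneg.mpr hp)) (sub_le_self _ (by positivity))
  have hmul : (1 + r) * p ≤ M * p := by gcongr
  linear_combination t * hM' + hlhs + hrhs + hmul + hinv + hp

theorem exists_hasBackbone (hp : 2 ≤ p) (hq : 2 ≤ q) :
    ∃ C : ℝ, ∀ᶠ n : ℕ in atTop, ∃ f, HasBackbone p q n f ∧
      (1 - 1 / (p : ℝ) - 1 / q) * n ≤ (1 - 1 / (p : ℝ)) * f + C := by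
  set M := (p - 1) * q with hM
  refine ⟨M * p, (eventually_ge_atTop (1 + M * M * p)).mono fun n hn ↦ ?_⟩
  obtain ⟨t, r, rfl, hrM, hr⟩ := exists_eq_one_add_mul_add hp hq hM hn
  refine ⟨_, (hasBackbone_add_mul hp hq t).add hp hr, ?_⟩
  have hdensity := density_mul_le (p := p) (q := q) (M := M) (t := t) (r := r)
    (by exact_mod_cast (show 1 ≤ p by lia)) (by positivity)
    (by rw [hM, Nat.cast_mul, Nat.cast_pred (by lia)])
    (by positivity) (by exact_mod_cast (show 1 + r ≤ M by lia))
  rw [Nat.cast_sub hr]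
  push_cast [Nat.cast_sub (show p ≤ M from le_pred_mul hp hq), Nat.cast_pred (show 0 < p by lia)]
  exact hdensity

end Backbone

/-! ### Subgroup growth of `C_{p_1} * ⋯ * C_{p_m}` -/

section PointStabilizer

variable {G X : Type*} [Group G]

/-- The stabilizer of `b` under the action of `G` on `X` given by `φ`. -/
def pointStabilizer (φ : G →* Equiv.Perm X) (b : X) : Subgroup G :=
  (MulAction.stabilizer (Equiv.Perm X) b).comap φ

theorem mem_pointStabilizer {φ : G →* Equiv.Perm X} {b : X} {g : G} :
    g ∈ pointStabilizer φ b ↔ φ g b = b :=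
  Iff.rfl

theorem index_pointStabilizer {φ : G →* Equiv.Perm X} {b : X} (hφ : ∀ v, ∃ g, φ g b = v) :
    (pointStabilizer φ b).index = Nat.card X := by
  let := MulAction.compHom X φ
  have : MulAction.orbit G b = Set.univ := Set.eq_univ_of_forall hφ
  rw [← Set.ncard_univ, ← this]
  exact MulAction.index_stabilizer G b

theorem exists_apply_eq_of_forall_mapsTo {φ : G →* Equiv.Perm X} {b : X}
    (hφ : ∀ S : Set X, b ∈ S → (∀ g, Set.MapsTo (φ g) S S) → S = Set.univ) (v : X) :
    ∃ g, φ g b = v := by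
  suffices {v | ∃ g, φ g b = v} = Set.univ from this.ge (Set.mem_univ v)
  refine hφ _ ⟨1, by simp⟩ fun g ↦ ?_
  rintro _ ⟨h, rfl⟩
  exact ⟨g * h, by simp⟩

theorem eq_of_pointStabilizer_eq {φ ψ : G →* Equiv.Perm X} {b : X}
    (h : pointStabilizer φ b = pointStabilizer ψ b)
    (huniv : ∀ S : Set X, b ∈ S → (∀ g, ∀ v ∈ S, φ g v = ψ g v → φ g v ∈ S) → S = Set.univ) :
    φ = ψ := by
  have hagree : {v | ∀ g, φ g b = v → ψ g b = v} = Set.univ := by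
    refine huniv _ (fun g hg ↦ mem_pointStabilizer.mp (h ▸ mem_pointStabilizer.mpr hg)) ?_
    intro g v hv hgv k hk
    have := hv (g⁻¹ * k) (by simp [hk])
    simpa [Equiv.symm_apply_eq, hgv] using this
  have hbase (g : G) : ψ g b = φ g b := hagree.ge (Set.mem_univ (φ g b)) g rfl
  ext g v
  obtain ⟨k, rfl⟩ := exists_apply_eq_of_forall_mapsTo
    (fun S hb hS ↦ huniv S hb fun g v hv _ ↦ hS g hv) v
  calc φ g (φ k b) = φ (g * k) b := by simp
    _ = ψ g (ψ k b) := by rw [← hbase]; simp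
    _ = ψ g (φ k b) := by rw [hbase]

end PointStabilizer

section CyclicFreeProduct

variable {m : ℕ} {p : Fin m → ℕ}

/-- The universal property of `C_{p_1} * ⋯ * C_{p_m}`. -/
def cyclicHomEquiv (G : Type*) [Group G] :
    (CyclicFreeProduct m p →* G) ≃ ∀ i, {x : G // x ^ p i = 1} where
  toFun φ i := ⟨φ (.of i), by rw [← map_pow, cyclicFreeProduct_gen_pow, map_one]⟩
  invFun x := PresentedGroup.toGroup (f := fun i ↦ (x i : G)) (by
    rintro _ ⟨i, rfl⟩
    simpa using (x i).2)
  left_inv φ := PresentedGroup.ext fun i ↦ by simp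
  right_inv x := by ext; simp

theorem cyclicHomEquiv_symm_of {G : Type*} [Group G] (x : ∀ i, {x : G // x ^ p i = 1}) (i : Fin m) :
    (cyclicHomEquiv G).symm x (.of i) = x i :=
  congrArg Subtype.val (congrFun ((cyclicHomEquiv G).apply_symm_apply x) i)

theorem card_monoidHom_cyclicFreeProduct (n : ℕ) :
    Nat.card (CyclicFreeProduct m p →* Equiv.Perm (Fin n)) = ∏ i, torsionCount (p i) n := by
  rw [Nat.card_congr (cyclicHomEquiv _), Nat.card_pi]
  rfl

instance presentedGroup_fg {α : Type*} [Finite α] (rels : Set (FreeGroup α)) :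
    Group.FG (PresentedGroup rels) :=
  Group.fg_of_surjective (PresentedGroup.mk_surjective rels)

/-- The permutations that the `i`-th generator may induce in an extension of the action of
`C_{p_{i₁}} * C_{p_{i₂}}` given by `π` and `ρ`: the generator `i₁` is left free on the fixed points
of `π`, and all generators other than `i₁`, `i₂` are unconstrained. -/
def backboneLifts {X : Type*} (p : Fin m → ℕ) (i₁ i₂ : Fin m) (π ρ : Equiv.Perm X) (i : Fin m) :
    Set (Equiv.Perm X) :=
  {τ | τ ^ p i = 1 ∧ (i = i₁ → ∀ v, π v ≠ v → τ v = π v) ∧ (i = i₂ → τ = ρ)}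

/-- The action of `C_{p_1} * ⋯ * C_{p_m}` given by a choice of lifts of the generators. -/
def liftHom {X : Type*} {i₁ i₂ : Fin m} {π ρ : Equiv.Perm X}
    (σ : ∀ i, backboneLifts p i₁ i₂ π ρ i) : CyclicFreeProduct m p →* Equiv.Perm X :=
  (cyclicHomEquiv _).symm fun i ↦ ⟨σ i, (σ i).2.1⟩

section Lifts

variable {X : Type*} {i₁ i₂ : Fin m} {π ρ : Equiv.Perm X} {b : X}

theorem liftHom_of (σ : ∀ i, backboneLifts p i₁ i₂ π ρ i) (i : Fin m) :
    liftHom σ (.of i) = (σ i : Equiv.Perm X) :=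
  cyclicHomEquiv_symm_of _ i

theorem liftHom_injective :
    Function.Injective (liftHom : (∀ i, backboneLifts p i₁ i₂ π ρ i) → _) := fun σ τ h ↦ by
  ext1 i
  rw [← Subtype.coe_inj, ← liftHom_of, h, liftHom_of]

theorem IsBackbone.eq_univ_of_liftHom_mem (h : IsBackbone (p i₁) (p i₂) π ρ b)
    (σ τ : ∀ i, backboneLifts p i₁ i₂ π ρ i) {S : Set X} (hb : b ∈ S)
    (hS : ∀ g, ∀ v ∈ S, liftHom σ g v = liftHom τ g v → liftHom σ g v ∈ S) : S = Set.univ := by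
  refine h.eq_univ S hb (fun v hv ↦ ?_) fun v hv ↦ ?_
  · obtain hfix | hne := eq_or_ne (π v) v
    · rwa [hfix]
    have hlift (υ : ∀ i, backboneLifts p i₁ i₂ π ρ i) : liftHom υ (.of i₁) v = π v := by
      rw [liftHom_of]
      exact (υ i₁).2.2.1 rfl v hne
    exact hlift σ ▸ hS (.of i₁) v hv ((hlift σ).trans (hlift τ).symm)
  · have hlift (υ : ∀ i, backboneLifts p i₁ i₂ π ρ i) : liftHom υ (.of i₂) v = ρ v := by
      rw [liftHom_of, (υ i₂).2.2.2 rfl]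
    exact hlift σ ▸ hS (.of i₂) v hv ((hlift σ).trans (hlift τ).symm)

theorem IsBackbone.prod_card_backboneLifts_le [Finite X] (h : IsBackbone (p i₁) (p i₂) π ρ b) :
    ∏ i, Nat.card (backboneLifts p i₁ i₂ π ρ i) ≤
      numSubgroups (CyclicFreeProduct m p) (Nat.card X) := by
  have hindex (σ : ∀ i, backboneLifts p i₁ i₂ π ρ i) :
      (pointStabilizer (liftHom σ) b).index = Nat.card X :=
    index_pointStabilizer <| exists_apply_eq_of_forall_mapsTo fun S hb hS ↦
      h.eq_univ_of_liftHom_mem σ σ hb fun g v hv _ ↦ hS g hv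
  have : Nonempty X := ⟨b⟩
  have := finite_index_eq (G := CyclicFreeProduct m p) (Nat.card_pos (α := X)).ne'
  rw [← Nat.card_pi, numSubgroups]
  refine Nat.card_le_card_of_injective (fun σ ↦ ⟨pointStabilizer (liftHom σ) b, hindex σ⟩) ?_
  intro σ τ hστ
  exact liftHom_injective <| eq_of_pointStabilizer_eq (congrArg Subtype.val hστ)
    fun S hb hS ↦ h.eq_univ_of_liftHom_mem σ τ hb hS

theorem torsionCount_le_card_backboneLifts_left [Finite X] (hne : i₁ ≠ i₂) (hπ : π ^ p i₁ = 1) :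
    torsionCount (p i₁) (Nat.card {v // π v = v}) ≤ Nat.card (backboneLifts p i₁ i₂ π ρ i₁) := by
  rw [← card_pow_eq_one]
  refine Nat.card_le_card_of_injective
    (fun t ↦ ⟨fillFixed π t, fillFixed_pow_eq_one hπ t.2,
      fun _ _ ↦ fillFixed_apply_of_ne t.1, fun h ↦ (hne h).elim⟩) fun s t hst ↦ ?_
  exact Subtype.ext (fillFixed_injective π (congrArg Subtype.val hst))

theorem one_le_card_backboneLifts_right [Finite X] (hne : i₁ ≠ i₂) (hρ : ρ ^ p i₂ = 1) :
    1 ≤ Nat.card (backboneLifts p i₁ i₂ π ρ i₂) :=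
  have : Nonempty (backboneLifts p i₁ i₂ π ρ i₂) := ⟨ρ, hρ, fun h ↦ (hne h.symm).elim, fun _ ↦ rfl⟩
  Nat.card_pos

theorem card_backboneLifts_of_ne [Finite X] {i : Fin m} (h₁ : i ≠ i₁) (h₂ : i ≠ i₂) :
    Nat.card (backboneLifts p i₁ i₂ π ρ i) = torsionCount (p i) (Nat.card X) := by
  rw [← card_pow_eq_one]
  exact Nat.card_congr (.subtypeEquivRight fun τ ↦ by simp [backboneLifts, h₁, h₂])

end Lifts

end CyclicFreeProduct

section Growth

variable {m : ℕ} {p : Fin m → ℕ}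

/-- `m - 1 - ∑ 1 / p_i`, minus the rational Euler characteristic of `C_{p_1} * ⋯ * C_{p_m}`. The
number of index `n` subgroups of this group is `exp (growthRate p * n log n + O(n))`. -/
noncomputable def growthRate (p : Fin m → ℕ) : ℝ :=
  m - 1 - ∑ i, 1 / (p i : ℝ)

theorem sum_one_sub_inv (p : Fin m → ℕ) : ∑ i, (1 - 1 / (p i : ℝ)) = growthRate p + 1 := by
  rw [growthRate, Finset.sum_sub_distrib, Finset.sum_const, Finset.card_fin, nsmul_one]
  ring

theorem exists_numSubgroups_le_exp (hp : ∀ i, 0 < p i) :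
    ∃ C, 0 ≤ C ∧ ∀ n, n ≠ 0 → (numSubgroups (CyclicFreeProduct m p) n : ℝ) ≤
      Real.exp (growthRate p * (n * Real.log n) + C * n) := by
  refine ⟨m * Real.log 2 + 2, by positivity, fun n hn ↦ ?_⟩
  have hT (i : Fin m) : (torsionCount (p i) n : ℝ) ≠ 0 := by
    exact_mod_cast (torsionCount_pos (p i) n).ne'
  have hle : (numSubgroups (CyclicFreeProduct m p) n : ℝ) ≤
      (∏ i, (torsionCount (p i) n : ℝ)) * n / n.factorial := by
    rw [le_div_iff₀ (by positivity)]
    exact_mod_cast card_monoidHom_cyclicFreeProduct (p := p) n ▸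
      numSubgroups_mul_factorial_le (CyclicFreeProduct m p) hn
  have hprod : Real.log (∏ i, (torsionCount (p i) n : ℝ)) ≤
      (growthRate p + 1) * (n * Real.log n) + m * (Real.log 2 * n) :=
    calc Real.log (∏ i, (torsionCount (p i) n : ℝ))
        = ∑ i, Real.log (torsionCount (p i) n) := Real.log_prod fun i _ ↦ hT i
      _ ≤ ∑ i, ((1 - 1 / (p i : ℝ)) * (n * Real.log n) + Real.log 2 * n) :=
          Finset.sum_le_sum fun i _ ↦ log_torsionCount_le (hp i) n
      _ = _ := by
          rw [Finset.sum_add_distrib, ← Finset.sum_mul, sum_one_sub_inv, Finset.sum_const,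
            Finset.card_fin, nsmul_eq_mul]
  have hlog : Real.log n ≤ n := Real.log_le_self n.cast_nonneg
  refine hle.trans <| (Real.le_exp_log _).trans <| Real.exp_le_exp.mpr ?_
  rw [Real.log_div (by simp [Finset.prod_ne_zero_iff, hT, hn]) (by positivity),
    Real.log_mul (Finset.prod_ne_zero_iff.mpr fun i _ ↦ hT i) (by positivity)]
  linear_combination hprod + hlog + mul_log_sub_le_log_factorial n

theorem mul_log_sub_le_mul_log (f : ℕ) {n : ℕ} (hn : n ≠ 0) :
    f * Real.log n - n ≤ f * Real.log f := by
  obtain rfl | hf := eq_or_ne f 0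
  · simp
  have h := Real.log_le_sub_one_of_pos (show 0 < (n : ℝ) / f by positivity)
  rw [Real.log_div (by positivity) (by positivity)] at h
  have hmul := mul_le_mul_of_nonneg_left h f.cast_nonneg
  have hcancel : (f : ℝ) * (n / f) = n := by field
  linear_combination hmul + hcancel + (f.cast_nonneg : (0 : ℝ) ≤ f)

theorem exists_le_log_torsionCount_of_density {p : ℕ} (hp : 2 ≤ p) (w C : ℝ) :
    ∃ D : ℝ, 0 ≤ D ∧ ∀ n : ℕ, n ≠ 0 → ∀ f : ℕ, f ≤ n → w * n ≤ (1 - 1 / (p : ℝ)) * f + C →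
      w * (n * Real.log n) - D * n ≤ Real.log (torsionCount p f) := by
  obtain ⟨E, hE0, hE⟩ := exists_le_log_torsionCount hp
  refine ⟨|C| + E + 1, by positivity, fun n hn f hfn hw ↦ ?_⟩
  have hlog : 0 ≤ Real.log n := Real.log_natCast_nonneg n
  have hfn' : (f : ℝ) ≤ n := mod_cast hfn
  have hp' : 0 ≤ 1 - 1 / (p : ℝ) :=
    sub_nonneg.mpr ((div_le_one (by positivity)).mpr (mod_cast one_le_two.trans hp))
  have hdensity : w * n * Real.log n ≤ ((1 - 1 / (p : ℝ)) * f + C) * Real.log n := by gcongr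
  have hC : C * Real.log n ≤ |C| * n :=
    mul_le_mul (le_abs_self C) (Real.log_le_self n.cast_nonneg) hlog (abs_nonneg C)
  have hEf : E * f ≤ E * n := by gcongr
  have hfix := mul_le_mul_of_nonneg_left (mul_log_sub_le_mul_log f hn) hp'
  have hn' : (1 - 1 / (p : ℝ)) * n ≤ n :=
    mul_le_of_le_one_left n.cast_nonneg (sub_le_self _ (by positivity))
  linear_combination hdensity + hC + hEf + hfix + hn' + hE f

theorem exists_backbone_le_log_torsionCount {p q : ℕ} (hp : 2 ≤ p) (hq : 2 ≤ q) :
    ∃ C : ℝ, 0 ≤ C ∧ ∀ᶠ n : ℕ in atTop, ∃ (X : Type) (_ : Finite X) (π ρ : Equiv.Perm X) (b : X),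
      IsBackbone p q π ρ b ∧ Nat.card X = n ∧
        (1 - 1 / (p : ℝ) - 1 / q) * (n * Real.log n) - C * n ≤
          Real.log (torsionCount p (Nat.card {x // π x = x})) := by
  obtain ⟨C, hC⟩ := exists_hasBackbone hp hq
  obtain ⟨D, hD0, hD⟩ := exists_le_log_torsionCount_of_density hp (1 - 1 / (p : ℝ) - 1 / q) C
  refine ⟨D, hD0, (hC.and (eventually_ne_atTop 0)).mono ?_⟩
  rintro n ⟨⟨f, ⟨X, hX, π, ρ, b, hb, hcard, hf⟩, hdensity⟩, hn⟩
  refine ⟨X, hX, π, ρ, b, hb, hcard, hD n hn _ (hcard ▸ Finite.card_subtype_le _) ?_⟩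
  refine hdensity.trans ?_
  have : 0 ≤ 1 - 1 / (p : ℝ) :=
    sub_nonneg.mpr ((div_le_one (by positivity)).mpr (mod_cast one_le_two.trans hp))
  gcongr

/-- The exponent such that there are `exp (liftWeight p i₁ i₂ i * n log n + O(n))` lifts of the
`i`-th generator to a backbone on `n` points of which the generator `i₁` fixes as many as possible.
-/
noncomputable def liftWeight (p : Fin m → ℕ) (i₁ i₂ i : Fin m) : ℝ :=
  1 - 1 / (p i : ℝ) - (if i = i₁ then 1 / (p i₂ : ℝ) else 0) -
    if i = i₂ then 1 - 1 / (p i₂ : ℝ) else 0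

theorem sum_liftWeight (p : Fin m → ℕ) (i₁ i₂ : Fin m) :
    ∑ i, liftWeight p i₁ i₂ i = growthRate p := by
  simp only [liftWeight]
  rw [Finset.sum_sub_distrib, Finset.sum_sub_distrib, sum_one_sub_inv, Fintype.sum_ite_eq',
    Fintype.sum_ite_eq']
  ring

theorem exp_le_torsionCount {p k : ℕ} {x : ℝ} (hx : x ≤ Real.log (torsionCount p k)) :
    Real.exp x ≤ torsionCount p k :=
  (Real.le_log_iff_exp_le (mod_cast torsionCount_pos p k)).mp hx

theorem IsBackbone.exp_le_card_backboneLifts {X : Type*} [Finite X] {i₁ i₂ : Fin m}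
    {π ρ : Equiv.Perm X} {b : X} (hb : IsBackbone (p i₁) (p i₂) π ρ b) (hne : i₁ ≠ i₂) {n : ℕ}
    (hn : Nat.card X = n) {C C₁ : ℝ} (hC0 : 0 ≤ C) (hC₁0 : 0 ≤ C₁)
    (hC₁ : (1 - 1 / (p i₁ : ℝ) - 1 / p i₂) * (n * Real.log n) - C₁ * n ≤
      Real.log (torsionCount (p i₁) (Nat.card {x // π x = x}))) {i : Fin m}
    (hC : (1 - 1 / (p i : ℝ)) * (n * Real.log n) - C * n ≤ Real.log (torsionCount (p i) n)) :
    Real.exp (liftWeight p i₁ i₂ i * (n * Real.log n) - (C + C₁) * n) ≤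
      Nat.card (backboneLifts p i₁ i₂ π ρ i) := by
  have hCn : 0 ≤ C * n := by positivity
  have hC₁n : 0 ≤ C₁ * n := by positivity
  obtain rfl | h₁ := eq_or_ne i i₁
  · refine (exp_le_torsionCount ?_).trans
      (mod_cast torsionCount_le_card_backboneLifts_left hne hb.pow_left)
    simp only [liftWeight, if_true, if_neg hne]
    linear_combination hC₁ + hCn
  obtain rfl | h₂ := eq_or_ne i i₂
  · refine (Real.exp_le_one_iff.mpr ?_).trans
      (mod_cast one_le_card_backboneLifts_right hne hb.pow_right)
    simp only [liftWeight, if_true, if_neg h₁]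
    linear_combination hCn + hC₁n
  · rw [card_backboneLifts_of_ne h₁ h₂, hn]
    refine exp_le_torsionCount ?_
    simp only [liftWeight, if_neg h₁, if_neg h₂]
    linear_combination hC + hC₁n

theorem exists_exp_le_numSubgroups (hp : ∀ i, 2 ≤ p i) {i₁ i₂ : Fin m} (hne : i₁ ≠ i₂) :
    ∃ C, ∀ᶠ n : ℕ in atTop, Real.exp (growthRate p * (n * Real.log n) - C * n) ≤
      numSubgroups (CyclicFreeProduct m p) n := by
  obtain ⟨C₁, hC₁0, hC₁⟩ := exists_backbone_le_log_torsionCount (hp i₁) (hp i₂)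
  choose C hC0 hC using fun i ↦ exists_le_log_torsionCount (hp i)
  refine ⟨∑ i, (C i + C₁), hC₁.mono ?_⟩
  rintro n ⟨X, hX, π, ρ, b, hb, hn, hC₁⟩
  calc Real.exp (growthRate p * (n * Real.log n) - (∑ i, (C i + C₁)) * n)
      = ∏ i, Real.exp (liftWeight p i₁ i₂ i * (n * Real.log n) - (C i + C₁) * n) := by
        rw [← Real.exp_sum, Finset.sum_sub_distrib, ← Finset.sum_mul, ← Finset.sum_mul,
          sum_liftWeight]
    _ ≤ ∏ i, (Nat.card (backboneLifts p i₁ i₂ π ρ i) : ℝ) :=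
        Finset.prod_le_prod (fun i _ ↦ (Real.exp_pos _).le) fun i _ ↦
          hb.exp_le_card_backboneLifts hne hn (hC0 i) hC₁0 hC₁ (hC i n)
    _ ≤ _ := mod_cast hn ▸ hb.prod_card_backboneLifts_le

theorem two_mul_le_of_mem_properDivisors {e n : ℕ} (he : e ∈ n.properDivisors) : 2 * e ≤ n := by
  have hn : n ≠ 0 := fun hn ↦ by simp [hn] at he
  obtain ⟨d, hd, rfl⟩ := (Nat.mem_properDivisors_iff_exists hn).mp he
  rw [mul_comm]
  exact Nat.mul_le_mul_left e hd

theorem sum_properDivisors_le_exp {a : ℕ → ℕ} {δ C : ℝ} (hδ : 0 ≤ δ) (hC : 0 ≤ C)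
    (hupper : ∀ n, n ≠ 0 → (a n : ℝ) ≤ Real.exp (δ * (n * Real.log n) + C * n)) (n : ℕ) :
    (∑ e ∈ n.properDivisors, a e : ℝ) ≤
      Real.exp (δ / 2 * (n * Real.log n) + (C + 1) * n) := by
  have hterm : ∀ e ∈ n.properDivisors,
      (a e : ℝ) ≤ Real.exp (δ / 2 * (n * Real.log n) + C * n) := fun e he ↦ by
    have he0 : e ≠ 0 := (Nat.pos_of_mem_properDivisors he).ne'
    have hen : (2 * e : ℝ) ≤ n := mod_cast two_mul_le_of_mem_properDivisors he
    have hlog : Real.log e ≤ Real.log n :=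
      Real.log_le_log (by positivity) (mod_cast (Nat.mem_properDivisors.mp he).2.le)
    have hmul : 2 * e * Real.log e ≤ n * Real.log n :=
      mul_le_mul hen hlog (Real.log_natCast_nonneg e) n.cast_nonneg
    refine (hupper e he0).trans (Real.exp_le_exp.mpr ?_)
    linear_combination δ / 2 * hmul + C * hen + C * (e.cast_nonneg : (0 : ℝ) ≤ e)
  have hcard : (n.properDivisors.card : ℝ) ≤ Real.exp n :=
    calc (n.properDivisors.card : ℝ) ≤ n := mod_cast
          (Finset.card_le_card Nat.properDivisors_subset_divisors).trans n.card_divisors_le_self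
      _ ≤ Real.exp n := by linarith [Real.add_one_le_exp (n : ℝ)]
  calc (∑ e ∈ n.properDivisors, a e : ℝ)
      ≤ n.properDivisors.card * Real.exp (δ / 2 * (n * Real.log n) + C * n) := by
        simpa using Finset.sum_le_card_nsmul _ _ _ hterm
    _ ≤ Real.exp n * Real.exp (δ / 2 * (n * Real.log n) + C * n) := by gcongr
    _ = _ := by
        rw [← Real.exp_add]
        ring_nf

theorem tendsto_mul_sum_properDivisors_div {a : ℕ → ℕ} {δ C C' B : ℝ} (hδ : 0 < δ) (hC : 0 ≤ C)
    (hB : 0 < B) (hupper : ∀ n, n ≠ 0 → (a n : ℝ) ≤ Real.exp (δ * (n * Real.log n) + C * n))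
    (hlower : ∀ᶠ n : ℕ in atTop, Real.exp (δ * (n * Real.log n) - C' * n) ≤ a n) :
    Tendsto (fun n : ℕ ↦ B ^ n * (∑ e ∈ n.properDivisors, a e : ℝ) / a n) atTop (𝓝 0) := by
  have hgap : Tendsto (fun n : ℕ ↦ δ / 2 * Real.log n + -(C + 1 + C' + Real.log B)) atTop atTop :=
    tendsto_atTop_add_const_right _ _ <|
      (Real.tendsto_log_atTop.comp tendsto_natCast_atTop_atTop).const_mul_atTop (half_pos hδ)
  have hlim := Real.tendsto_exp_neg_atTop_nhds_zero.comp
    (tendsto_natCast_atTop_atTop.atTop_mul_atTop₀ hgap)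
  refine squeeze_zero' (.of_forall fun n ↦ by positivity) (hlower.mono fun n hn ↦ ?_) hlim
  calc B ^ n * (∑ e ∈ n.properDivisors, a e : ℝ) / a n
      ≤ B ^ n * Real.exp (δ / 2 * (n * Real.log n) + (C + 1) * n) /
          Real.exp (δ * (n * Real.log n) - C' * n) := by
        gcongr
        exact sum_properDivisors_le_exp hδ.le hC hupper n
    _ = _ := by
        rw [← Real.exp_log hB, ← Real.exp_nat_mul, ← Real.exp_add, ← Real.exp_sub, Real.exp_log hB]
        simp only [Function.comp_apply]
        ring_nf

end Growth

/-! ### Central extensions -/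

section CentralExtension

variable {G F : Type*} [Group G] [Group F]

theorem normal_of_le_center {L : Subgroup G} (hL : L ≤ Subgroup.center G) : L.Normal :=
  ⟨fun x hx g ↦ by rwa [Subgroup.mem_center_iff.mp (hL hx) g, mul_inv_cancel_right]⟩

theorem tendsto_subgroupProb_ker_le [Group.FG G] {φ : G →* F} (hφ : Function.Surjective φ)
    (hcenter : φ.ker ≤ Subgroup.center G) [IsCyclic φ.ker] {δ C C' : ℝ} (hδ : 0 < δ) (hC : 0 ≤ C)
    (hupper : ∀ n, n ≠ 0 → (numSubgroups F n : ℝ) ≤ Real.exp (δ * (n * Real.log n) + C * n))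
    (hlower : ∀ᶠ n : ℕ in atTop,
      Real.exp (δ * (n * Real.log n) - C' * n) ≤ numSubgroups F n) :
    Tendsto (fun n ↦ subgroupProb G n (φ.ker ≤ ·)) atTop (𝓝 1) := by
  have hlim := (tendsto_mul_sum_properDivisors_div hδ hC (B := 2 ^ Group.rank G) (by positivity)
    hupper hlower).const_sub 1
  rw [sub_zero] at hlim
  refine tendsto_of_tendsto_of_tendsto_of_le_of_le' hlim tendsto_const_nhds
    ((hlower.and (eventually_ne_atTop 0)).mono ?_) (.of_forall fun n ↦ subgroupProb_le_one n _)
  rintro n ⟨hlow, hn⟩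
  have hgood := card_index_eq_ker_le hφ n
  have hpos : numSubgroups F n ≠ 0 := by exact_mod_cast ((Real.exp_pos _).trans_le hlow).ne'
  refine le_trans ?_ (one_sub_le_subgroupProb hn (hgood.trans_ne hpos))
  rw [hgood]
  gcongr
  have hbad := card_index_eq_not_le_le hcenter hn
  simp only [card_index_eq_ker_le hφ] at hbad
  rw [← pow_mul']
  exact_mod_cast hbad

end CentralExtension

section TorusKnotGroup

variable {m : ℕ} (p : Fin m → ℕ)

theorem torusKnotGroup_of_pow (i j : Fin m) :
    (PresentedGroup.of i : TorusKnotGroup m p) ^ p i = PresentedGroup.of j ^ p j := by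
  have h : PresentedGroup.mk (torusRels m p)
      (FreeGroup.of i ^ p i * (FreeGroup.of j ^ p j)⁻¹) = 1 :=
    (QuotientGroup.eq_one_iff _).mpr (Subgroup.subset_normalClosure ⟨i, j, rfl⟩)
  rwa [map_mul, map_inv, mul_inv_eq_one, map_pow, map_pow] at h

theorem torusKnotGroup_of_pow_mem_center (i : Fin m) :
    (PresentedGroup.of i : TorusKnotGroup m p) ^ p i ∈ Subgroup.center (TorusKnotGroup m p) := by
  rw [← Subgroup.centralizer_univ, ← Subgroup.coe_top,
    ← PresentedGroup.closure_range_of, Subgroup.centralizer_closure, Subgroup.mem_centralizer_iff]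
  rintro _ ⟨j, rfl⟩
  rw [torusKnotGroup_of_pow p i j]
  exact Commute.self_pow _ _

theorem ker_phiMap_le_zpowers (i : Fin m) :
    (PhiMap m p).ker ≤ Subgroup.zpowers (PresentedGroup.of i ^ p i) := by
  set L := Subgroup.zpowers ((PresentedGroup.of i : TorusKnotGroup m p) ^ p i)
  have hL : L ≤ Subgroup.center _ :=
    Subgroup.zpowers_le.mpr (torusKnotGroup_of_pow_mem_center p i)
  have : L.Normal := normal_of_le_center hL
  let θ : CyclicFreeProduct m p →* TorusKnotGroup m p ⧸ L :=
    (cyclicHomEquiv _).symm fun j ↦ ⟨QuotientGroup.mk' L (.of j), by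
      rw [← map_pow, torusKnotGroup_of_pow p j i]
      exact (QuotientGroup.eq_one_iff _).mpr (Subgroup.mem_zpowers _)⟩
  have hθ : θ.comp (PhiMap m p) = QuotientGroup.mk' L :=
    PresentedGroup.ext fun j ↦ by simp [θ, PhiMap, cyclicHomEquiv_symm_of]
  calc (PhiMap m p).ker ≤ (θ.comp (PhiMap m p)).ker := fun g hg ↦ by
        rw [MonoidHom.mem_ker, MonoidHom.comp_apply, MonoidHom.mem_ker.mp hg, map_one]
    _ = L := by rw [hθ, QuotientGroup.ker_mk']

theorem ker_phiMap_le_center (hm : 0 < m) : (PhiMap m p).ker ≤ Subgroup.center _ :=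
  (ker_phiMap_le_zpowers p ⟨0, hm⟩).trans
    (Subgroup.zpowers_le.mpr (torusKnotGroup_of_pow_mem_center p ⟨0, hm⟩))

theorem isCyclic_ker_phiMap (hm : 0 < m) : IsCyclic (PhiMap m p).ker :=
  isCyclic_of_injective _
    (Subgroup.inclusion_injective (ker_phiMap_le_zpowers p ⟨0, hm⟩))

theorem phiMap_surjective : Function.Surjective (PhiMap m p) := by
  rw [← MonoidHom.range_eq_top, eq_top_iff, ← PresentedGroup.closure_range_of,
    Subgroup.closure_le]
  rintro _ ⟨i, rfl⟩
  exact ⟨.of i, PresentedGroup.toGroup.of _⟩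

end TorusKnotGroup

theorem central_class_lifts_fully (m : ℕ) (p : Fin m → ℕ) (hp : ∀ i, 2 ≤ p i)
    (h : ∑ i, (1 : ℝ) / (p i : ℝ) < (m : ℝ) - 1)
    (g : TorusKnotGroup m p) (hg : g ≠ 1) (hgL : g ∈ (PhiMap m p).ker) :
    Filter.Tendsto (fun n : ℕ =>
      subgroupProb (TorusKnotGroup m p) n (fun H => fixedCosetCount g H = n))
      Filter.atTop (𝓝 1) := by
  have hrate : 0 < growthRate p := sub_pos.mpr h
  have hm : 1 < m := by
    have hsum : 0 ≤ ∑ i, 1 / (p i : ℝ) := by positivity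
    exact_mod_cast (show (1 : ℝ) < m by linarith)
  have hne : (⟨0, by lia⟩ : Fin m) ≠ ⟨1, hm⟩ := by simp
  obtain ⟨C, hC, hupper⟩ := exists_numSubgroups_le_exp fun i ↦ two_pos.trans_le (hp i)
  obtain ⟨C', hlower⟩ := exists_exp_le_numSubgroups hp hne
  have := isCyclic_ker_phiMap p (by lia)
  have hker := tendsto_subgroupProb_ker_le (phiMap_surjective p)
    (ker_phiMap_le_center p (by lia)) hrate hC hupper hlower
  refine tendsto_of_tendsto_of_tendsto_of_le_of_le' hker tendsto_const_nhds
    ((eventually_ne_atTop 0).mono fun n hn ↦ subgroupProb_mono hn fun H hH hLH ↦ ?_)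
    (.of_forall fun n ↦ subgroupProb_le_one n _)
  exact (fixedCosetCount_eq_index hLH hgL).trans hH
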